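/- Let S and S' be self-similar Jordan zippers in ℝ^n with the same signature, with similarity ratios p_i and q_i respectively, and let f : γ → γ' be the homeomorphism agreeing with S and S'. Suppose α = log q_i / log p_i for some index i, with α = min over j of min(log p_j / log q_j, log q_j / log p_j). Then for the points x_k = S_i^k(z_0) and y_k = S_i^k(z_m) (k ∈ ℕ), one has ‖f(x_k) − f(y_k)‖ = M_0 ‖x_k − y_k‖^α where M_0 = ‖z'_m − z'_0‖ / ‖z_m − z_0‖^α. In particular, α is the optimal (largest possible) Hölder exponent for f. -/

import Mathlib

open Set Metric

/-- `S i`, for `i < m`, is a contracting similarity with ratio `r i ∈ (0,1)`. -/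
def IsSimilaritySystem {X : Type*} [MetricSpace X] (m : ℕ)
    (S : ℕ → X → X) (r : ℕ → ℝ) : Prop :=
  ∀ i < m, 0 < r i ∧ r i < 1 ∧ ∀ x y, dist (S i x) (S i y) = r i * dist x y

/-- Self-similar zipper with maps `S 0, …, S (m-1)`, ratios `r`, vertices `z 0, …, z m`,
signature `ε` (values in `{0,1}`).  Here `S i` plays the role of the map `S_{i+1}` of the
paper, so the zipper conditions read `S i (z 0) = z (i + ε i)` and
`S i (z m) = z (i + 1 - ε i)`. -/
def IsZipper {X : Type*} [MetricSpace X] (m : ℕ)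
    (S : ℕ → X → X) (r : ℕ → ℝ) (z : ℕ → X) (ε : ℕ → ℕ) : Prop :=
  1 ≤ m ∧ IsSimilaritySystem m S r ∧ (∀ i < m, ε i ≤ 1) ∧
    ∀ i < m, S i (z 0) = z (i + ε i) ∧ S i (z m) = z (i + 1 - ε i)

/-- Linear zipper on `[0,1]`, with vertices `0 = t 0 < t 1 < … < t m = 1`. -/
def IsLinearZipper (m : ℕ) (T : ℕ → ℝ → ℝ) (r : ℕ → ℝ) (t : ℕ → ℝ) (ε : ℕ → ℕ) : Prop :=
  IsZipper m T r t ε ∧ t 0 = 0 ∧ t m = 1 ∧ ∀ i < m, t i < t (i + 1)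

/-- `K` is the attractor of the iterated function system `{S i : i < m}`. -/
def IsAttractor {X : Type*} [MetricSpace X] (m : ℕ) (S : ℕ → X → X) (K : Set X) : Prop :=
  K.Nonempty ∧ IsCompact K ∧ K = ⋃ i ∈ Finset.range m, S i '' K

/-- `g` is a structural parametrization of the zipper `S` (with vertices `z`)
relative to the linear zipper `T` (with vertices `t`). -/
def IsStructuralParam {X : Type*} [MetricSpace X] (m : ℕ) (S : ℕ → X → X)
    (T : ℕ → ℝ → ℝ) (t : ℕ → ℝ) (z : ℕ → X) (g : ℝ → X) : Prop :=
  ContinuousOn g (Icc 0 1) ∧ (∀ i ≤ m, g (t i) = z i) ∧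
    ∀ i < m, ∀ x ∈ Icc (0:ℝ) 1, S i (g x) = g (T i x)

/-- A Jordan zipper: a zipper whose attractor `γ` is a Jordan arc, i.e. some structural
parametrization is injective on `[0,1]` (hence a homeomorphism onto `γ`). -/
def IsJordanZipper {X : Type*} [MetricSpace X] (m : ℕ) (S : ℕ → X → X) (r : ℕ → ℝ)
    (z : ℕ → X) (ε : ℕ → ℕ) (γ : Set X) : Prop :=
  IsZipper m S r z ε ∧ IsAttractor m S γ ∧
    ∃ T rT t g, IsLinearZipper m T rT t ε ∧ IsStructuralParam m S T t z g ∧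
      InjOn g (Icc 0 1) ∧ g '' Icc 0 1 = γ

/-- `g` is an injective continuous parametrization of the arc `γ` by `[0,1]`. -/
def IsArcParam {X : Type*} [MetricSpace X] (γ : Set X) (g : ℝ → X) : Prop :=
  ContinuousOn g (Icc 0 1) ∧ InjOn g (Icc 0 1) ∧ g '' Icc 0 1 = γ

/-- Bounded turning with constant `M`: every subarc `γ_{xy}` (expressed via any
parametrization of the arc) has diameter at most `M‖x - y‖`. -/
def BoundedTurning {X : Type*} [MetricSpace X] (γ : Set X) (M : ℝ) : Prop :=
  0 < M ∧ ∀ g : ℝ → X, IsArcParam γ g →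
    ∀ s ∈ Icc (0:ℝ) 1, ∀ u ∈ Icc (0:ℝ) 1, diam (g '' uIcc s u) ≤ M * dist (g s) (g u)

/-- `f` agrees with the systems `S` and `S'` on `γ`: `f ∘ S i = S' i ∘ f` on `γ`. -/
def Agrees {X Y : Type*} [MetricSpace X] [MetricSpace Y] (m : ℕ)
    (S : ℕ → X → X) (S' : ℕ → Y → Y) (γ : Set X) (f : X → Y) : Prop :=
  ∀ i < m, ∀ x ∈ γ, f (S i x) = S' i (f x)

/-- `f` restricts to a homeomorphism of the compact set `γ` onto `γ'`. -/
def IsHomeoOnto {X Y : Type*} [MetricSpace X] [MetricSpace Y]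
    (γ : Set X) (γ' : Set Y) (f : X → Y) : Prop :=
  ContinuousOn f γ ∧ InjOn f γ ∧ f '' γ = γ'

/-- Composition `S_{i₁} ∘ … ∘ S_{i_k}` along a multi-index (a list). -/
def compS {X : Type*} (S : ℕ → X → X) : List ℕ → X → X
  | [] => id
  | i :: l => S i ∘ compS S l

/-- Product of the ratios along a multi-index. -/
def ratioProd (p : ℕ → ℝ) (l : List ℕ) : ℝ := (l.map p).prod

lemma fix_unique_aux {X : Type*} [MetricSpace X] {a b : X} {c : ℝ} (hc : c < 1)
    (h : dist a b = c * dist a b) : a = b := by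
  by_contra hne
  have : 0 < dist a b := dist_pos.mpr hne
  nlinarith

lemma zipper_endpoints {X : Type*} [MetricSpace X] (m : ℕ)
    (S S' : ℕ → X → X) (p q : ℕ → ℝ) (z z' : ℕ → X) (ε : ℕ → ℕ) (γ : Set X)
    (hS : IsZipper m S p z ε) (hS' : IsZipper m S' q z' ε) (f : X → X)
    (hfa : Agrees m S S' γ f) (h0 : z 0 ∈ γ) (h1 : z m ∈ γ) :
    f (z 0) = z' 0 ∧ f (z m) = z' m := by
  obtain ⟨hm, -, hε, hz⟩ := hS
  obtain ⟨-, hq, -, hz'⟩ := hS'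
  have l0 : 0 < m := hm
  have l1 : m - 1 < m := by omega
  obtain ⟨a1, a2⟩ := hz 0 l0
  obtain ⟨b1, b2⟩ := hz (m - 1) l1
  obtain ⟨a1', a2'⟩ := hz' 0 l0
  obtain ⟨b1', b2'⟩ := hz' (m - 1) l1
  obtain ⟨q0, q1, q2⟩ := hq 0 l0
  obtain ⟨r0, r1, r2⟩ := hq (m - 1) l1
  have e0 := hε 0 l0
  have e1 := hε (m - 1) l1
  have f00 := hfa 0 l0 _ h0
  have f01 := hfa 0 l0 _ h1
  have f10 := hfa (m - 1) l1 _ h0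
  have f11 := hfa (m - 1) l1 _ h1
  have em : m - 1 + 1 = m := by omega
  have hcase : ∀ e : ℕ, e ≤ 1 → e = 0 ∨ e = 1 := by intro e he; omega
  rcases hcase _ e0 with h | h <;> rcases hcase _ e1 with k | k <;>
    simp only [h, k, em, add_zero, zero_add, Nat.sub_zero, Nat.sub_self,
      Nat.add_sub_cancel] at a1 a2 b1 b2 a1' a2' b1' b2'
  · rw [a1] at f00
    rw [b2] at f11
    refine ⟨fix_unique_aux q1 ?_, fix_unique_aux r1 ?_⟩
    · rw [← q2, ← f00, a1']
    · rw [← r2, ← f11, b2']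
  · rw [a1] at f00
    rw [b1] at f10
    have H : f (z 0) = z' 0 := by
      refine fix_unique_aux q1 ?_
      rw [← q2, ← f00, a1']
    exact ⟨H, by rw [f10, H, b1']⟩
  · rw [a2] at f01
    rw [b2] at f11
    have H : f (z m) = z' m := by
      refine fix_unique_aux r1 ?_
      rw [← r2, ← f11, b2']
    exact ⟨by rw [f01, H, a2'], H⟩
  · rw [a2] at f01
    rw [b1] at f10
    have H : f (z 0) = z' 0 := by
      refine fix_unique_aux (c := q 0 * q (m - 1)) (by nlinarith) ?_
      rw [mul_assoc, ← r2, ← q2, ← f10, ← f01, b1', a2']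
    exact ⟨H, by rw [f10, H, b1']⟩

lemma jordan_endpoints {X : Type*} [MetricSpace X] (m : ℕ)
    (S : ℕ → X → X) (p : ℕ → ℝ) (z : ℕ → X) (ε : ℕ → ℕ) (γ : Set X)
    (hS : IsJordanZipper m S p z ε γ) : z 0 ∈ γ ∧ z m ∈ γ ∧ 0 < dist (z m) (z 0) := by
  obtain ⟨-, -, T, rT, t, g, ⟨-, t0, t1, -⟩, ⟨-, hg, -⟩, hinj, himg⟩ := hS
  have g0 := hg 0 (Nat.zero_le _)
  have g1 := hg m le_rfl
  rw [t0] at g0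
  rw [t1] at g1
  have i0 : (0:ℝ) ∈ Icc (0:ℝ) 1 := by simp
  have i1 : (1:ℝ) ∈ Icc (0:ℝ) 1 := by simp
  refine ⟨himg ▸ ⟨0, i0, g0⟩, himg ▸ ⟨1, i1, g1⟩, dist_pos.mpr ?_⟩
  rw [← g0, ← g1]
  intro h
  exact one_ne_zero (hinj i1 i0 h)

lemma dist_iter_aux {X : Type*} [MetricSpace X] {F : X → X} {c : ℝ}
    (h : ∀ x y, dist (F x) (F y) = c * dist x y) (k : ℕ) (x y : X) :
    dist (F^[k] x) (F^[k] y) = c ^ k * dist x y := by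
  induction k with
  | zero => simp
  | succ k ih => rw [Function.iterate_succ_apply', Function.iterate_succ_apply', h, ih]; ring

/-- if `α = log q_i / log p_i` realizes the minimum, then along the points
`x_k = S_i^k(z_0)`, `y_k = S_i^k(z_m)` the Hölder inequality for `f` is an equality with
constant `M₀ = ‖z'_m - z'_0‖ / ‖z_m - z_0‖^α`; in particular `α` is the optimal Hölder
exponent of `f`. -/
theorem holder_exponent_sharp {n : ℕ} (m : ℕ)
    (S S' : ℕ → EuclideanSpace ℝ (Fin n) → EuclideanSpace ℝ (Fin n)) (p q : ℕ → ℝ)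
    (z z' : ℕ → EuclideanSpace ℝ (Fin n)) (ε : ℕ → ℕ)
    (γ γ' : Set (EuclideanSpace ℝ (Fin n)))
    (hS : IsJordanZipper m S p z ε γ) (hS' : IsJordanZipper m S' q z' ε γ')
    (f : EuclideanSpace ℝ (Fin n) → EuclideanSpace ℝ (Fin n))
    (hf : IsHomeoOnto γ γ' f) (hfa : Agrees m S S' γ f)
    (hm : 0 < m) (α : ℝ)
    (hα : α = (Finset.range m).inf' (Finset.nonempty_range_iff.mpr hm.ne')
      (fun j => min (Real.log (p j) / Real.log (q j)) (Real.log (q j) / Real.log (p j))))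
    (i : ℕ) (hi : i < m) (hαi : α = Real.log (q i) / Real.log (p i)) :
    (∀ k : ℕ, dist (f ((S i)^[k] (z 0))) (f ((S i)^[k] (z m))) =
        dist (z' m) (z' 0) / dist (z m) (z 0) ^ α *
          dist ((S i)^[k] (z 0)) ((S i)^[k] (z m)) ^ α) ∧
      ∀ β : ℝ, α < β →
        ¬ ∃ C > (0:ℝ), ∀ x ∈ γ, ∀ y ∈ γ, dist (f x) (f y) ≤ C * dist x y ^ β := by
  obtain ⟨h0, h1, hd⟩ := jordan_endpoints m S p z ε γ hS
  obtain ⟨-, -, hd'⟩ := jordan_endpoints m S' q z' ε γ' hS'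
  obtain ⟨E0, E1⟩ := zipper_endpoints m S S' p q z z' ε γ hS.1 hS'.1 f hfa h0 h1
  obtain ⟨p0, p1, p2⟩ := hS.1.2.1 i hi
  obtain ⟨q0, q1, q2⟩ := hS'.1.2.1 i hi
  have hγ := hS.2.1.2.2
  have hmap : ∀ x ∈ γ, S i x ∈ γ := by
    intro x hx
    rw [hγ]
    exact mem_biUnion (Finset.mem_coe.mpr (Finset.mem_range.mpr hi)) ⟨x, hx, rfl⟩
  have hmapk : ∀ k : ℕ, ∀ x ∈ γ, (S i)^[k] x ∈ γ := by
    intro k x hx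
    induction k with
    | zero => exact hx
    | succ k ih => rw [Function.iterate_succ_apply']; exact hmap _ ih
  have hfk : ∀ k : ℕ, ∀ x ∈ γ, f ((S i)^[k] x) = (S' i)^[k] (f x) := by
    intro k x hx
    induction k with
    | zero => rfl
    | succ k ih =>
      rw [Function.iterate_succ_apply', Function.iterate_succ_apply',
        hfa i hi _ (hmapk k x hx), ih]
  have hlog : Real.log (p i) < 0 := Real.log_neg p0 p1
  have hq : q i = p i ^ α := by
    rw [Real.rpow_def_of_pos p0, hαi, mul_div_cancel₀ _ hlog.ne, Real.exp_log q0]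
  have D1 : ∀ k : ℕ, dist ((S i)^[k] (z 0)) ((S i)^[k] (z m)) = p i ^ k * dist (z m) (z 0) := by
    intro k
    rw [dist_iter_aux p2, dist_comm (z 0)]
  have D2 : ∀ k : ℕ, dist (f ((S i)^[k] (z 0))) (f ((S i)^[k] (z m))) =
      q i ^ k * dist (z' m) (z' 0) := by
    intro k
    rw [hfk k _ h0, hfk k _ h1, E0, E1, dist_iter_aux q2, dist_comm (z' 0)]
  have P : ∀ (k : ℕ) (b : ℝ), (p i ^ k) ^ b = (p i ^ b) ^ k := by
    intro k b
    rw [← Real.rpow_natCast, ← Real.rpow_natCast, ← Real.rpow_mul p0.le, ← Real.rpow_mul p0.le,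
      mul_comm]
  constructor
  · intro k
    rw [D1, D2, Real.mul_rpow (pow_pos p0 k).le hd.le, P, ← hq]
    have := (Real.rpow_pos_of_pos hd α).ne'
    field_simp
  · rintro β hβ ⟨C, hC, H⟩
    have hb : p i ^ β < q i := by
      rw [hq]; exact Real.rpow_lt_rpow_of_exponent_gt p0 p1 hβ
    have hb0 : 0 < p i ^ β := Real.rpow_pos_of_pos p0 β
    have h1r : 1 < q i / p i ^ β := (one_lt_div hb0).mpr hb
    obtain ⟨k, hk⟩ := pow_unbounded_of_one_lt
      (C * dist (z m) (z 0) ^ β / dist (z' m) (z' 0)) h1r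
    have := H _ (hmapk k _ h0) _ (hmapk k _ h1)
    rw [D1, D2, Real.mul_rpow (pow_pos p0 k).le hd.le, P] at this
    rw [div_pow, div_lt_div_iff₀ hd' (pow_pos hb0 k)] at hk
    nlinarith
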